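/- Let d ≥ 1, 2 < p ≤ ∞, 0 < γ < 2d(1/2 − 1/p) and a > 0. There is a constant C depending only on d, γ, p and a such that for all Schwartz functions f₁, f₂, f₃ on ℝ^d, ‖H_{a,γ}(f₁, f₂, f₃)‖_{L̂^p} ≤ C ‖f₁‖_{L̂^p} ‖f₂‖_{L̂^p} ‖f₃‖_{L̂^p}. -/

import Mathlib

open MeasureTheory Real FourierTransform
open scoped ENNReal

/-- The Hartree trilinear operator
`H_{a,γ}(f,g,h)(x) = ((e^{-a|·|} |·|^{-γ}) ∗ (f ḡ))(x) · h(x)` on `ℝ^d`. -/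
noncomputable def hartreeOp (d : ℕ) (a γ : ℝ)
    (f g h : EuclideanSpace ℝ (Fin d) → ℂ) : EuclideanSpace ℝ (Fin d) → ℂ :=
  fun x =>
    (∫ y : EuclideanSpace ℝ (Fin d),
      ((Real.exp (-(a * ‖y‖)) * ‖y‖ ^ (-γ) : ℝ) : ℂ) *
        (f (x - y) * (starRingEnd ℂ) (g (x - y)))) * h x


lemma aux_fourier_exp_neg_abs (w : ℝ) :
    Integrable (fun v : ℝ => ((Real.exp (-|v|) : ℝ) : ℂ)) ∧
    𝓕 (fun v : ℝ => ((Real.exp (-|v|) : ℝ) : ℂ)) w = ((2 / (1 + 4 * π ^ 2 * w ^ 2) : ℝ) : ℂ) := by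
  have hre : (-1 + (-2 * π * w : ℝ) * Complex.I : ℂ).re < 0 := by simp
  have hre2 : 0 < (1 + (-2 * π * w : ℝ) * Complex.I : ℂ).re := by simp
  have hI : Integrable (fun v : ℝ => Real.exp (-|v|)) := by
    rw [← integrableOn_univ, ← Set.Iic_union_Ioi (a := (0:ℝ))]
    refine IntegrableOn.union ?_ ?_
    · refine (integrableOn_exp_mul_Iic (a := 1) one_pos 0).congr_fun (fun v hv => ?_) measurableSet_Iic
      simp [abs_of_nonpos (Set.mem_Iic.1 hv)]
    · refine (integrableOn_exp_mul_Ioi (a := -1) (by norm_num) 0).congr_fun (fun v hv => ?_) measurableSet_Ioi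
      simp [abs_of_pos (Set.mem_Ioi.1 hv)]
  refine ⟨hI.ofReal, ?_⟩
  rw [Real.fourier_real_eq_integral_exp_smul]
  have hint : Integrable (fun v : ℝ => Complex.exp (↑(-2 * π * v * w) * Complex.I) • ((Real.exp (-|v|) : ℝ) : ℂ)) := by
    refine hI.mono' (Continuous.aestronglyMeasurable (by fun_prop)) (ae_of_all _ fun v => ?_)
    rw [norm_smul, Complex.norm_exp_ofReal_mul_I, one_mul, Complex.norm_real, Real.norm_of_nonneg (by positivity)]
  rw [← intervalIntegral.integral_Iic_add_Ioi hint.integrableOn hint.integrableOn (b := 0)]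
  have e1 : ∫ v in Set.Iic (0:ℝ), Complex.exp (↑(-2 * π * v * w) * Complex.I) • ((Real.exp (-|v|) : ℝ) : ℂ)
      = ∫ v in Set.Iic (0:ℝ), Complex.exp ((1 + (-2 * π * w : ℝ) * Complex.I) * v) := by
    refine setIntegral_congr_fun measurableSet_Iic fun v hv => ?_
    simp only [abs_of_nonpos (Set.mem_Iic.1 hv), smul_eq_mul, Complex.ofReal_exp, ← Complex.exp_add]
    congr 1; push_cast; ring
  have e2 : ∫ v in Set.Ioi (0:ℝ), Complex.exp (↑(-2 * π * v * w) * Complex.I) • ((Real.exp (-|v|) : ℝ) : ℂ)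
      = ∫ v in Set.Ioi (0:ℝ), Complex.exp ((-1 + (-2 * π * w : ℝ) * Complex.I) * v) := by
    refine setIntegral_congr_fun measurableSet_Ioi fun v hv => ?_
    simp only [abs_of_pos (Set.mem_Ioi.1 hv), smul_eq_mul, Complex.ofReal_exp, ← Complex.exp_add]
    congr 1; push_cast; ring
  rw [e1, e2, integral_exp_mul_complex_Iic hre2, integral_exp_mul_complex_Ioi hre]
  have h1 : (1 + (-2 * π * w : ℝ) * Complex.I : ℂ) ≠ 0 := fun h => by rw [h] at hre2; simp at hre2
  have h2 : (-1 + (-2 * π * w : ℝ) * Complex.I : ℂ) ≠ 0 := fun h => by rw [h] at hre; simp at hre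
  have h3 : (1 + 4 * π ^ 2 * w ^ 2 : ℂ) ≠ 0 := by
    have : (1 + 4 * π ^ 2 * w ^ 2 : ℝ) ≠ 0 := by positivity
    exact_mod_cast this
  simp only [Complex.ofReal_zero, mul_zero, Complex.exp_zero]
  rw [div_add_div _ _ h1 h2]
  push_cast at *
  rw [div_eq_div_iff (mul_ne_zero h1 h2) h3]
  ring_nf
  simp only [Complex.I_sq]
  ring

lemma aux_gauss1 (t v : ℝ) (hv : 0 < v) :
    ∫ x : ℝ, Complex.exp (↑(2 * π * (x * t)) * Complex.I) * ((2 * Real.exp (-(1 + 4 * π ^ 2 * x ^ 2) * v) : ℝ) : ℂ)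
      = ((Real.exp (-v) * (π * v) ^ (-(1/2) : ℝ) * Real.exp (-(t ^ 2 / (4 * v))) : ℝ) : ℂ) := by
  have hb : 0 < ((4 * π ^ 2 * v : ℝ) : ℂ).re := by rw [Complex.ofReal_re]; positivity
  have := fourierIntegral_gaussian hb ((2 * π * t : ℝ) : ℂ)
  have e : ∀ x : ℝ, Complex.exp (↑(2 * π * (x * t)) * Complex.I) * ((2 * Real.exp (-(1 + 4 * π ^ 2 * x ^ 2) * v) : ℝ) : ℂ)
     = (2 * Real.exp (-v) : ℝ) * (Complex.exp (Complex.I * ((2 * π * t : ℝ) : ℂ) * ↑x) * Complex.exp (-((4 * π ^ 2 * v : ℝ) : ℂ) * ↑x ^ 2)) := by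
    intro x
    push_cast
    rw [← Complex.exp_add, mul_left_comm, ← Complex.exp_add, mul_assoc (2:ℂ) (Complex.exp _), ← Complex.exp_add]
    congr 2; ring
  simp_rw [e]
  rw [integral_const_mul, this]
  have e2 : ((π : ℂ) / ((4 * π ^ 2 * v : ℝ) : ℂ)) ^ (1/2 : ℂ) = ((1/2 * (π * v) ^ (-(1/2) : ℝ) : ℝ) : ℂ) := by
    have : (1/2 * (π * v) ^ (-(1/2) : ℝ) : ℝ) = (π / (4 * π ^ 2 * v)) ^ (1/2 : ℝ) := by
      rw [Real.rpow_neg (by positivity), ← Real.sqrt_eq_rpow, ← Real.sqrt_eq_rpow]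
      symm
      rw [Real.sqrt_eq_iff_mul_self_eq (by positivity) (by positivity)]
      have := Real.mul_self_sqrt (show 0 ≤ π * v by positivity)
      have h0 : √(π * v) ≠ 0 := by positivity
      rw [show 1 / 2 * (√(π * v))⁻¹ * (1 / 2 * (√(π * v))⁻¹) = 1/4 * (√(π * v) * √(π * v))⁻¹ by rw [mul_inv]; ring, this]
      field_simp
    rw [this, Complex.ofReal_cpow (by positivity)]
    push_cast; rfl
  rw [e2, show (-((2 * π * t : ℝ) : ℂ) ^ 2 / (4 * ((4 * π ^ 2 * v : ℝ) : ℂ))) = ((-(t ^ 2 / (4 * v)) : ℝ) : ℂ) by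
    have : (v : ℂ) ≠ 0 := by exact_mod_cast hv.ne'
    have : (π : ℂ) ≠ 0 := by exact_mod_cast pi_ne_zero
    push_cast; field_simp; try ring]
  rw [← Complex.ofReal_exp]
  push_cast; ring

lemma aux_subord_int (t : ℝ) (ht : 0 ≤ t) :
    ∫ v in Set.Ioi (0:ℝ), Real.exp (-v) * (π * v) ^ (-(1/2) : ℝ) * Real.exp (-(t ^ 2 / (4 * v))) = Real.exp (-t) := by
  have hF : 𝓕 (fun v : ℝ => ((Real.exp (-|v|) : ℝ) : ℂ)) = fun w => ((2 / (1 + 4 * π ^ 2 * w ^ 2) : ℝ) : ℂ) :=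
    funext fun w => (aux_fourier_exp_neg_abs w).2
  have hI2 : Integrable (fun w : ℝ => 2 / (1 + 4 * π ^ 2 * w ^ 2)) := by
    have := (integrable_inv_one_add_sq.comp_mul_left' (show (2 * π) ≠ 0 by positivity)).const_mul 2
    refine this.congr (ae_of_all _ fun w => ?_)
    simp only [div_eq_mul_inv]; ring_nf
  have hinv := congrFun (Continuous.fourierInv_fourier_eq (f := (fun v : ℝ => ((Real.exp (-|v|) : ℝ) : ℂ))) (by fun_prop) (aux_fourier_exp_neg_abs 0).1
    (by rw [hF]; exact hI2.ofReal)) t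
  rw [hF, Real.fourierInv_eq'] at hinv
  have hpos : ∀ x : ℝ, 0 < 1 + 4 * π ^ 2 * x ^ 2 := fun x => by positivity
  have hin : ∀ x : ℝ, ∫ v in Set.Ioi (0:ℝ), 2 * Real.exp (-(1 + 4 * π ^ 2 * x ^ 2) * v) = 2 / (1 + 4 * π ^ 2 * x ^ 2) := by
    intro x
    rw [integral_const_mul, integral_exp_mul_Ioi (by linarith [hpos x])]
    rw [mul_zero, Real.exp_zero, neg_div_neg_eq]; ring
  have hsw := integral_integral_swap (μ := (volume : Measure ℝ)) (ν := volume.restrict (Set.Ioi (0:ℝ)))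
    (f := fun x v => Complex.exp (↑(2 * π * (x * t)) * Complex.I) * ((2 * Real.exp (-(1 + 4 * π ^ 2 * x ^ 2) * v) : ℝ) : ℂ)) (by
      rw [integrable_prod_iff (Continuous.aestronglyMeasurable (by unfold Function.uncurry; fun_prop))]
      have hn : ∀ x v : ℝ, ‖Complex.exp (↑(2 * π * (x * t)) * Complex.I) * ((2 * Real.exp (-(1 + 4 * π ^ 2 * x ^ 2) * v) : ℝ) : ℂ)‖ = 2 * Real.exp (-(1 + 4 * π ^ 2 * x ^ 2) * v) := by
        intro x v
        rw [norm_mul, Complex.norm_exp_ofReal_mul_I, one_mul, Complex.norm_real, Real.norm_of_nonneg (by positivity)]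
      constructor
      · refine ae_of_all _ fun x => ?_
        refine Integrable.mono' (g := fun v => 2 * Real.exp (-(1 + 4 * π ^ 2 * x ^ 2) * v)) ?_ (Continuous.aestronglyMeasurable (by unfold Function.uncurry; fun_prop)) (ae_of_all _ fun v => (hn x v).le)
        exact (integrableOn_exp_mul_Ioi (by linarith [hpos x]) 0).const_mul 2
      · simp only [Function.uncurry_apply_pair]
        simp_rw [hn, hin]
        exact hI2)
  have e1 : ∀ x : ℝ, ∫ v in Set.Ioi (0:ℝ), Complex.exp (↑(2 * π * (x * t)) * Complex.I) * ((2 * Real.exp (-(1 + 4 * π ^ 2 * x ^ 2) * v) : ℝ) : ℂ)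
      = Complex.exp (↑(2 * π * (x * t)) * Complex.I) * ((2 / (1 + 4 * π ^ 2 * x ^ 2) : ℝ) : ℂ) := by
    intro x
    rw [integral_const_mul, ← hin x, integral_complex_ofReal]
  simp_rw [e1] at hsw
  rw [setIntegral_congr_fun measurableSet_Ioi (fun v hv => aux_gauss1 t v hv), integral_complex_ofReal] at hsw
  have : ∀ x : ℝ, inner ℝ x t = x * t := fun x => by simp [mul_comm]
  simp only [this, smul_eq_mul] at hinv
  rw [hsw, abs_of_nonneg ht] at hinv
  exact_mod_cast hinv

lemma aux_lintegral_of_integral {α : Type*} [MeasurableSpace α] {μ : Measure α} {f : α → ℝ} (hf : 0 ≤ᵐ[μ] f)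
    {c : ℝ} (hc : c ≠ 0) (h : ∫ x, f x ∂μ = c) : ∫⁻ x, ENNReal.ofReal (f x) ∂μ = ENNReal.ofReal c := by
  have hi : Integrable f μ := by
    by_contra hn
    exact hc (h ▸ integral_undef hn)
  rw [← h, ofReal_integral_eq_lintegral_ofReal hi hf]

noncomputable def auxMuS (γ : ℝ) : Measure ℝ :=
  (volume.restrict (Set.Ioi 0)).withDensity (fun s => ENNReal.ofReal (s ^ (γ - 1) / Real.Gamma γ))

noncomputable def auxMuV : Measure ℝ :=
  (volume.restrict (Set.Ioi 0)).withDensity (fun v => ENNReal.ofReal (Real.exp (-v) * (π * v) ^ (-(1/2) : ℝ)))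

noncomputable def auxMu (γ : ℝ) : Measure (ℝ × ℝ) := (auxMuS γ).prod auxMuV

noncomputable def auxLam (a : ℝ) (z : ℝ × ℝ) : ℝ := (z.1 + a) ^ 2 / (4 * z.2)

instance auxMuS_sfinite (γ : ℝ) : SFinite (auxMuS γ) := by unfold auxMuS; infer_instance
instance auxMuV_sfinite : SFinite auxMuV := by unfold auxMuV; infer_instance
instance auxMu_sfinite (γ : ℝ) : SFinite (auxMu γ) := by unfold auxMu; infer_instance

lemma auxLam_measurable (a : ℝ) : Measurable (auxLam a) := by
  unfold auxLam; fun_prop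

lemma auxMu_pos (a γ : ℝ) (ha : 0 < a) : ∀ᵐ z ∂(auxMu γ), 0 < auxLam a z := by
  have h1 : auxMu γ ≪ (volume.restrict (Set.Ioi (0:ℝ))).prod (volume.restrict (Set.Ioi (0:ℝ))) :=
    (withDensity_absolutelyContinuous _ _).prod (withDensity_absolutelyContinuous _ _)
  refine h1.ae_le ?_
  rw [Measure.prod_restrict]
  filter_upwards [ae_restrict_mem (measurableSet_Ioi.prod measurableSet_Ioi)] with z hz
  have h1 : 0 < z.1 := hz.1
  have h2 : 0 < z.2 := hz.2
  unfold auxLam; positivity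

lemma lintegral_auxMuS (γ : ℝ) {f : ℝ → ℝ≥0∞} (hf : Measurable f) :
    ∫⁻ s, f s ∂(auxMuS γ) = ∫⁻ s in Set.Ioi 0, ENNReal.ofReal (s ^ (γ - 1) / Real.Gamma γ) * f s := by
  unfold auxMuS
  rw [lintegral_withDensity_eq_lintegral_mul _ (by fun_prop) hf]; rfl

lemma lintegral_auxMuV {f : ℝ → ℝ≥0∞} (hf : Measurable f) :
    ∫⁻ s, f s ∂auxMuV = ∫⁻ v in Set.Ioi 0, ENNReal.ofReal (Real.exp (-v) * (π * v) ^ (-(1/2) : ℝ)) * f v := by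
  unfold auxMuV
  rw [lintegral_withDensity_eq_lintegral_mul _ (by fun_prop) hf]; rfl

lemma auxMuS_ae (γ : ℝ) : ∀ᵐ s ∂(auxMuS γ), 0 < s :=
  (withDensity_absolutelyContinuous _ _).ae_le (ae_restrict_mem measurableSet_Ioi)

lemma auxMuV_ae : ∀ᵐ s ∂auxMuV, 0 < s :=
  (withDensity_absolutelyContinuous _ _).ae_le (ae_restrict_mem measurableSet_Ioi)

lemma aux_kernel (a γ t : ℝ) (ha : 0 < a) (hγ : 0 < γ) (ht : 0 < t) :
    ∫⁻ z, ENNReal.ofReal (Real.exp (-auxLam a z * t ^ 2)) ∂(auxMu γ) =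
      ENNReal.ofReal (Real.exp (-(a * t)) * t ^ (-γ)) := by
  have hm := auxLam_measurable a
  unfold auxMu
  rw [lintegral_prod _ (by fun_prop)]
  have h1 : ∀ s : ℝ, 0 < s → ∫⁻ v, ENNReal.ofReal (Real.exp (-auxLam a (s, v) * t ^ 2)) ∂auxMuV
      = ENNReal.ofReal (Real.exp (-((s + a) * t))) := by
    intro s hs
    rw [lintegral_auxMuV (by fun_prop),
      ← aux_lintegral_of_integral _ (Real.exp_pos _).ne' (aux_subord_int ((s + a) * t) (by positivity))]
    · refine setLIntegral_congr_fun measurableSet_Ioi fun v hv => ?_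
      have hv : 0 < v := hv
      rw [← ENNReal.ofReal_mul (by positivity)]
      congr 3
      unfold auxLam; simp only []; field_simp
    · filter_upwards [ae_restrict_mem measurableSet_Ioi] with v hv
      have hv : 0 < v := hv
      simp only [Pi.zero_apply]; positivity
  rw [lintegral_congr_ae (g := fun s => ENNReal.ofReal (Real.exp (-((s + a) * t))))
    (by filter_upwards [auxMuS_ae γ] with s hs using h1 s hs), lintegral_auxMuS _ (by fun_prop)]
  have hG := Real.Gamma_pos_of_pos hγ
  have h2 := integral_rpow_mul_exp_neg_mul_Ioi hγ ht
  have h3 := aux_lintegral_of_integral (by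
      filter_upwards [ae_restrict_mem measurableSet_Ioi] with v hv
      have hv : 0 < v := hv
      simp only [Pi.zero_apply]; positivity) (by positivity) h2
  have h4 : ENNReal.ofReal (Real.exp (-(a * t)) * t ^ (-γ)) =
      ENNReal.ofReal (Real.exp (-(a * t)) / Real.Gamma γ) * ENNReal.ofReal ((1 / t) ^ γ * Real.Gamma γ) := by
    rw [← ENNReal.ofReal_mul (by positivity), one_div, Real.inv_rpow ht.le, Real.rpow_neg ht.le]
    congr 1; field_simp
  rw [h4, ← h3, ← lintegral_const_mul _ (by fun_prop)]
  refine setLIntegral_congr_fun measurableSet_Ioi fun s hs => ?_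
  have hs : 0 < s := hs
  rw [← ENNReal.ofReal_mul (by positivity), ← ENNReal.ofReal_mul (by positivity)]
  congr 1
  rw [show -((s + a) * t) = -(a * t) + -(t * s) by ring, Real.exp_add]; ring

lemma aux_const (a γ κ : ℝ) (ha : 0 < a) (hγ : 0 < γ) (hκ : γ < 2 * κ) :
    ∫⁻ z, ENNReal.ofReal (auxLam a z ^ (-κ)) ∂(auxMu γ) < ∞ := by
  have hm := auxLam_measurable a
  have hG := Real.Gamma_pos_of_pos hγ
  have hκ0 : 0 < κ := by linarith
  unfold auxMu
  rw [lintegral_prod _ (by fun_prop)]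
  have hV : ∫⁻ v, ENNReal.ofReal ((4 * v) ^ κ) ∂auxMuV < ∞ := by
    rw [lintegral_auxMuV (by fun_prop)]
    have h := (Real.GammaIntegral_convergent (s := κ + 1/2) (by linarith)).const_mul (4 ^ κ * π ^ (-(1/2) : ℝ))
    refine lt_of_eq_of_lt ?_ h.lintegral_lt_top
    refine setLIntegral_congr_fun measurableSet_Ioi fun v hv => ?_
    have hv : 0 < v := hv
    rw [← ENNReal.ofReal_mul (by positivity), Real.mul_rpow pi_pos.le hv.le, Real.mul_rpow (by norm_num) hv.le,
      show κ + 1/2 - 1 = -(1/2) + κ by ring, Real.rpow_add hv]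
    congr 1; ring
  have hS : ∫⁻ s, ENNReal.ofReal ((s + a) ^ (-(2 * κ))) ∂(auxMuS γ) < ∞ := by
    rw [lintegral_auxMuS _ (by fun_prop), ← Set.Ioc_union_Ioi_eq_Ioi (zero_le_one (α := ℝ))]
    refine (lintegral_union_le _ _ _).trans_lt (ENNReal.add_lt_top.2 ⟨?_, ?_⟩)
    · have h : IntegrableOn (fun s : ℝ => s ^ (γ - 1)) (Set.Ioc 0 1) :=
        (intervalIntegrable_iff_integrableOn_Ioc_of_le zero_le_one).1 (intervalIntegral.intervalIntegrable_rpow' (by linarith))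
      refine lt_of_le_of_lt ?_ (h.const_mul (a ^ (-(2 * κ)) / Real.Gamma γ)).lintegral_lt_top
      refine setLIntegral_mono' measurableSet_Ioc fun s hs => ?_
      have hs : 0 < s := hs.1
      rw [← ENNReal.ofReal_mul (by positivity)]
      refine ENNReal.ofReal_le_ofReal ?_
      have : (s + a) ^ (-(2 * κ)) ≤ a ^ (-(2 * κ)) := Real.rpow_le_rpow_of_nonpos ha (by linarith) (by linarith)
      calc s ^ (γ - 1) / Gamma γ * (s + a) ^ (-(2 * κ)) ≤ s ^ (γ - 1) / Gamma γ * a ^ (-(2 * κ)) := by gcongr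
        _ = _ := by ring
    · have h : IntegrableOn (fun s : ℝ => s ^ (γ - 1 - 2 * κ)) (Set.Ioi 1) :=
        integrableOn_Ioi_rpow_of_lt (by linarith) one_pos
      refine lt_of_le_of_lt ?_ (h.const_mul (1 / Real.Gamma γ)).lintegral_lt_top
      refine setLIntegral_mono' measurableSet_Ioi fun s hs => ?_
      have hs : 0 < s := one_pos.trans hs
      rw [← ENNReal.ofReal_mul (by positivity)]
      refine ENNReal.ofReal_le_ofReal ?_
      have : (s + a) ^ (-(2 * κ)) ≤ s ^ (-(2 * κ)) := Real.rpow_le_rpow_of_nonpos hs (by linarith) (by linarith)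
      calc s ^ (γ - 1) / Gamma γ * (s + a) ^ (-(2 * κ)) ≤ s ^ (γ - 1) / Gamma γ * s ^ (-(2 * κ)) := by gcongr
        _ = _ := by rw [sub_eq_add_neg (γ - 1), Real.rpow_add hs]; ring
  refine lt_of_eq_of_lt ?_ (ENNReal.mul_lt_top hS hV)
  rw [← lintegral_mul_const _ (by fun_prop)]
  refine lintegral_congr_ae ?_
  filter_upwards [auxMuS_ae γ] with s hs
  rw [← lintegral_const_mul _ (by fun_prop)]
  refine lintegral_congr_ae ?_
  filter_upwards [auxMuV_ae] with v hv
  rw [← ENNReal.ofReal_mul (by positivity)]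
  congr 1
  unfold auxLam
  simp only []
  rw [Real.rpow_neg (by positivity), Real.div_rpow (by positivity) (by positivity), Real.rpow_neg (by positivity),
    Real.rpow_mul (by positivity), Real.rpow_two, inv_div]
  field_simp

lemma aux_gauss_lint {E : Type*} [NormedAddCommGroup E] [InnerProductSpace ℝ E] [FiniteDimensional ℝ E]
    [MeasurableSpace E] [BorelSpace E] {b : ℝ} (hb : 0 < b) :
    ∫⁻ y : E, ENNReal.ofReal (Real.exp (-b * ‖y‖ ^ 2)) =
      ENNReal.ofReal ((π / b) ^ ((Module.finrank ℝ E : ℝ) / 2)) :=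
  aux_lintegral_of_integral (ae_of_all _ fun _ => (Real.exp_pos _).le) (by positivity)
    (GaussianFourier.integral_rexp_neg_mul_sq_norm hb)

lemma aux_kernel_lint (d : ℕ) (hd : 1 ≤ d) (a γ : ℝ) (ha : 0 < a) (hγ : 0 < γ) (hγd : γ < d) :
    ∫⁻ y : EuclideanSpace ℝ (Fin d), ∫⁻ z, ENNReal.ofReal (Real.exp (-auxLam a z * ‖y‖ ^ 2)) ∂(auxMu γ) < ∞ := by
  have hm := auxLam_measurable a
  rw [lintegral_lintegral_swap (by unfold Function.uncurry; fun_prop)]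
  rw [lintegral_congr_ae (g := fun z => ENNReal.ofReal (π ^ ((d:ℝ)/2)) * ENNReal.ofReal (auxLam a z ^ (-((d:ℝ)/2))))]
  · rw [lintegral_const_mul _ (by fun_prop)]
    exact ENNReal.mul_lt_top ENNReal.ofReal_lt_top (aux_const a γ _ ha hγ (by linarith))
  · filter_upwards [auxMu_pos a γ ha] with z hz
    rw [aux_gauss_lint hz, ← ENNReal.ofReal_mul (by positivity), finrank_euclideanSpace_fin,
      Real.div_rpow pi_pos.le hz.le, Real.rpow_neg hz.le]
    rfl

lemma aux_ne_zero_ae (d : ℕ) (hd : 1 ≤ d) : ∀ᵐ y : EuclideanSpace ℝ (Fin d), y ≠ 0 := by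
  have : Nonempty (Fin d) := ⟨⟨0, hd⟩⟩
  exact Measure.ae_ne volume 0

lemma aux_kernel_integrable (d : ℕ) (hd : 1 ≤ d) (a γ : ℝ) (ha : 0 < a) (hγ : 0 < γ) (hγd : γ < d) :
    Integrable (fun y : EuclideanSpace ℝ (Fin d) => Real.exp (-(a * ‖y‖)) * ‖y‖ ^ (-γ)) := by
  refine ⟨Measurable.aestronglyMeasurable (by fun_prop), ?_⟩
  rw [hasFiniteIntegral_iff_ofReal (ae_of_all _ fun y => by positivity)]
  refine lt_of_eq_of_lt ?_ (aux_kernel_lint d hd a γ ha hγ hγd)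
  refine lintegral_congr_ae ?_
  filter_upwards [aux_ne_zero_ae d hd] with y hy
  rw [aux_kernel a γ _ ha hγ (norm_pos_iff.2 hy)]

lemma aux_kernel_fourier (d : ℕ) (hd : 1 ≤ d) (a γ : ℝ) (ha : 0 < a) (hγ : 0 < γ) (hγd : γ < d)
    (η : EuclideanSpace ℝ (Fin d)) :
    ‖𝓕 (fun y : EuclideanSpace ℝ (Fin d) => ((Real.exp (-(a * ‖y‖)) * ‖y‖ ^ (-γ) : ℝ) : ℂ)) η‖ₑ ≤
      ∫⁻ z, ENNReal.ofReal ((π / auxLam a z) ^ ((d : ℝ) / 2) * Real.exp (-(π ^ 2 * ‖η‖ ^ 2 / auxLam a z))) ∂(auxMu γ) := by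
  have hm := auxLam_measurable a
  have hK := aux_kernel_lint d hd a γ ha hγ hγd
  have hn : ∀ (y : EuclideanSpace ℝ (Fin d)) (z : ℝ × ℝ),
      ‖Complex.exp (↑(-2 * π * inner ℝ y η) * Complex.I) * ((Real.exp (-auxLam a z * ‖y‖ ^ 2) : ℝ) : ℂ)‖ₑ
       = ENNReal.ofReal (Real.exp (-auxLam a z * ‖y‖ ^ 2)) := by
    intro y z
    rw [← ofReal_norm, norm_mul, Complex.norm_exp_ofReal_mul_I, one_mul, Complex.norm_real, Real.norm_of_nonneg (Real.exp_pos _).le]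
  have hsw := integral_integral_swap (μ := (volume : Measure (EuclideanSpace ℝ (Fin d)))) (ν := auxMu γ)
    (f := fun y z => Complex.exp (↑(-2 * π * inner ℝ y η) * Complex.I) * ((Real.exp (-auxLam a z * ‖y‖ ^ 2) : ℝ) : ℂ)) (by
      refine ⟨Measurable.aestronglyMeasurable (by unfold Function.uncurry; fun_prop), ?_⟩
      rw [hasFiniteIntegral_iff_enorm]
      simp only [Function.uncurry_def, hn]
      rw [lintegral_prod _ (by fun_prop)]
      exact hK)
  have e : 𝓕 (fun y : EuclideanSpace ℝ (Fin d) => ((Real.exp (-(a * ‖y‖)) * ‖y‖ ^ (-γ) : ℝ) : ℂ)) η =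
     ∫ y, ∫ z, Complex.exp (↑(-2 * π * inner ℝ y η) * Complex.I) * ((Real.exp (-auxLam a z * ‖y‖ ^ 2) : ℝ) : ℂ) ∂(auxMu γ) := by
    rw [Real.fourier_eq']
    refine integral_congr_ae ?_
    filter_upwards [aux_ne_zero_ae d hd] with y hy
    rw [integral_const_mul, smul_eq_mul, integral_complex_ofReal, integral_eq_lintegral_of_nonneg_ae
      (ae_of_all _ fun _ => (Real.exp_pos _).le) (Measurable.aestronglyMeasurable (by fun_prop)),
      aux_kernel a γ _ ha hγ (norm_pos_iff.2 hy), ENNReal.toReal_ofReal (by positivity)]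
  rw [e, hsw]
  refine (enorm_integral_le_lintegral_enorm _).trans (le_of_eq (lintegral_congr_ae ?_))
  filter_upwards [auxMu_pos a γ ha] with z hz
  have hb : 0 < ((auxLam a z : ℝ) : ℂ).re := by simpa using hz
  have := fourier_gaussian_innerProductSpace hb η
  rw [Real.fourier_eq'] at this
  have e2 : ∫ y : EuclideanSpace ℝ (Fin d), Complex.exp (↑(-2 * π * inner ℝ y η) * Complex.I) * ((Real.exp (-auxLam a z * ‖y‖ ^ 2) : ℝ) : ℂ)
     = (((π / auxLam a z) ^ ((d : ℝ) / 2) * Real.exp (-(π ^ 2 * ‖η‖ ^ 2 / auxLam a z)) : ℝ) : ℂ) := by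
    push_cast [Complex.ofReal_cpow (show 0 ≤ π / auxLam a z by positivity)]
    simp only [smul_eq_mul, finrank_euclideanSpace_fin] at this
    push_cast at this
    rw [this]
    congr 2; ring
  rw [e2, ← ofReal_norm, Complex.norm_real, Real.norm_of_nonneg (by positivity)]

section auxFinal

variable {E : Type*} [NormedAddCommGroup E] [InnerProductSpace ℝ E] [FiniteDimensional ℝ E]
    [MeasurableSpace E] [BorelSpace E]

lemma aux_continuous_fourier {f : E → ℂ} (hf : Integrable f) : Continuous (𝓕 f) :=
  VectorFourier.fourierIntegral_continuous Real.continuous_fourierChar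
    (L := innerₗ E) (by exact continuous_inner) hf

lemma aux_young {A B : E → ℝ≥0∞} (hA : Measurable A) (hB : Measurable B) {q : ℝ} (hq : 1 ≤ q) :
    ∫⁻ ξ, (∫⁻ η, A η * B (ξ - η)) ^ q ≤ (∫⁻ η, A η) ^ q * ∫⁻ η, B η ^ q := by
  have hq0 : 0 < q := by linarith
  have hqi : q⁻¹ ≤ 1 := inv_le_one_of_one_le₀ hq
  have hqi0 : 0 < q⁻¹ := by positivity
  have h1 : ∀ ξ, (∫⁻ η, A η * B (ξ - η)) ^ q ≤ (∫⁻ η, A η) ^ (q - 1) * ∫⁻ η, A η * B (ξ - η) ^ q := by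
    intro ξ
    have h := ENNReal.lintegral_mul_norm_pow_le (μ := (volume : Measure E)) (f := A) (g := fun η => A η * B (ξ - η) ^ q)
      hA.aemeasurable (by fun_prop) (p := 1 - q⁻¹) (q := q⁻¹) (by linarith) hqi0.le (by ring)
    have e : ∀ η, A η ^ (1 - q⁻¹) * (A η * B (ξ - η) ^ q) ^ q⁻¹ = A η * B (ξ - η) := by
      intro η
      rw [ENNReal.mul_rpow_of_nonneg _ _ hqi0.le, ← mul_assoc, ← ENNReal.rpow_add_of_nonneg _ _ (by linarith) hqi0.le,
        ENNReal.rpow_rpow_inv hq0.ne']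
      simp
    simp_rw [e] at h
    calc _ ≤ _ := ENNReal.rpow_le_rpow h hq0.le
      _ = _ := by
        rw [ENNReal.mul_rpow_of_nonneg _ _ hq0.le, ENNReal.rpow_inv_rpow hq0.ne', ← ENNReal.rpow_mul]
        congr 2; field_simp
  calc _ ≤ ∫⁻ ξ, (∫⁻ η, A η) ^ (q - 1) * ∫⁻ η, A η * B (ξ - η) ^ q := lintegral_mono h1
    _ = (∫⁻ η, A η) ^ (q - 1) * ∫⁻ ξ, ∫⁻ η, A η * B (ξ - η) ^ q :=
        lintegral_const_mul _ (Measurable.lintegral_prod_right' (f := fun z : E × E => A z.2 * B (z.1 - z.2) ^ q) (by fun_prop))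
    _ = (∫⁻ η, A η) ^ (q - 1) * ((∫⁻ η, A η) * ∫⁻ η, B η ^ q) := by
        rw [lintegral_lintegral_swap (by unfold Function.uncurry; fun_prop), ← lintegral_mul_const _ hA]
        congr 1
        refine lintegral_congr fun η => ?_
        rw [lintegral_const_mul _ (by fun_prop), lintegral_sub_right_eq_self (fun x => B x ^ q) η]
    _ = _ := by
        rw [← mul_assoc]
        congr 1
        nth_rewrite 2 [← ENNReal.rpow_one (∫⁻ η, A η)]
        rw [← ENNReal.rpow_add_of_nonneg _ _ (by linarith) zero_le_one]
        simp

lemma aux_tri {F₁ F₂ G : E → ℝ≥0∞} (h₁ : Measurable F₁) (h₂ : Measurable F₂) (hG : Measurable G)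
    {q : ℝ} (hq : 1 ≤ q) (hq2 : 1/2 ≤ q⁻¹) :
    ∫⁻ η, G η ^ (2 * (1 - q⁻¹)) * ∫⁻ ζ, F₂ ζ * F₁ (η + ζ) ≤
      (∫⁻ η, G η) ^ (2 * (1 - q⁻¹)) * ((∫⁻ η, F₁ η ^ q) ^ q⁻¹ * (∫⁻ η, F₂ η ^ q) ^ q⁻¹) := by
  have hq0 : 0 < q := by linarith
  have hqi : q⁻¹ ≤ 1 := inv_le_one_of_one_le₀ hq
  have hqi0 : 0 < q⁻¹ := by positivity
  set τ := q⁻¹ with hτ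
  have hα : 0 ≤ 2 * τ - 1 := by linarith
  have hδ : 0 ≤ 1 - τ := by linarith
  have hqτ : q * τ = 1 := mul_inv_cancel₀ hq0.ne'
  have h := ENNReal.lintegral_prod_norm_pow_le (μ := (volume : Measure E).prod (volume : Measure E)) (Finset.univ : Finset (Fin 3))
    (f := ![fun z => F₁ (z.1 + z.2) ^ q * F₂ z.2 ^ q, fun z => G z.1 * F₂ z.2 ^ q, fun z => G z.1 * F₁ (z.1 + z.2) ^ q])
    (by
      intro i _
      fin_cases i
      · simp; fun_prop
      · simp; fun_prop
      · simp; fun_prop)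
    (p := ![2 * τ - 1, 1 - τ, 1 - τ]) (by simp [Fin.sum_univ_three]; ring)
    (by
      intro i _
      fin_cases i
      · simpa using hα
      · simpa using hδ
      · simpa using hδ)
  simp only [Fin.prod_univ_three, Matrix.cons_val_zero, Matrix.cons_val_one, Matrix.cons_val] at h
  have e0 : ∀ z : E × E, (F₁ (z.1 + z.2) ^ q * F₂ z.2 ^ q) ^ (2 * τ - 1) * (G z.1 * F₂ z.2 ^ q) ^ (1 - τ) *
      (G z.1 * F₁ (z.1 + z.2) ^ q) ^ (1 - τ) = G z.1 ^ (2 * (1 - τ)) * (F₂ z.2 * F₁ (z.1 + z.2)) := by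
    intro z
    have k : ∀ x : ℝ≥0∞, (x ^ q) ^ (2 * τ - 1) * (x ^ q) ^ (1 - τ) = x := by
      intro x
      rw [← ENNReal.rpow_add_of_nonneg _ _ hα hδ, ← ENNReal.rpow_mul,
        show q * (2 * τ - 1 + (1 - τ)) = 1 by rw [← hqτ]; ring, ENNReal.rpow_one]
    rw [ENNReal.mul_rpow_of_nonneg _ _ hα, ENNReal.mul_rpow_of_nonneg _ _ hδ, ENNReal.mul_rpow_of_nonneg _ _ hδ]
    conv_rhs => rw [← k (F₂ z.2), ← k (F₁ (z.1 + z.2)), two_mul, ENNReal.rpow_add_of_nonneg _ _ hδ hδ]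
    ring
  simp_rw [e0] at h
  rw [lintegral_prod _ (by fun_prop), lintegral_prod_symm _ (by fun_prop), lintegral_prod _ (by fun_prop),
    lintegral_prod _ (by fun_prop)] at h
  have i1 : ∫⁻ ζ, ∫⁻ η, F₁ (η + ζ) ^ q * F₂ ζ ^ q = (∫⁻ η, F₁ η ^ q) * ∫⁻ η, F₂ η ^ q := by
    rw [← lintegral_const_mul _ (by fun_prop)]
    refine lintegral_congr fun ζ => ?_
    rw [lintegral_mul_const _ (by fun_prop), lintegral_add_right_eq_self (fun x => F₁ x ^ q) ζ]
  have i2 : ∫⁻ η, ∫⁻ ζ, G η * F₂ ζ ^ q = (∫⁻ η, G η) * ∫⁻ η, F₂ η ^ q := by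
    rw [← lintegral_mul_const _ (by fun_prop)]
    refine lintegral_congr fun ζ => ?_
    rw [lintegral_const_mul _ (by fun_prop)]
  have i3 : ∫⁻ η, ∫⁻ ζ, G η * F₁ (η + ζ) ^ q = (∫⁻ η, G η) * ∫⁻ η, F₁ η ^ q := by
    rw [← lintegral_mul_const _ (by fun_prop)]
    refine lintegral_congr fun ζ => ?_
    rw [lintegral_const_mul _ (by fun_prop), lintegral_add_left_eq_self (fun x => F₁ x ^ q) ζ]
  simp only [] at h
  rw [i1, i2, i3] at h
  refine le_trans (le_of_eq ?_) (h.trans (le_of_eq ?_))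
  · refine lintegral_congr fun ζ => ?_
    rw [lintegral_const_mul _ (by fun_prop)]
  · rw [ENNReal.mul_rpow_of_nonneg _ _ hα, ENNReal.mul_rpow_of_nonneg _ _ hδ, ENNReal.mul_rpow_of_nonneg _ _ hδ]
    have k : ∀ x : ℝ≥0∞, x ^ τ = x ^ (2 * τ - 1) * x ^ (1 - τ) := by
      intro x
      rw [← ENNReal.rpow_add_of_nonneg _ _ hα hδ]; congr 1; ring
    rw [k (∫⁻ η, F₁ η ^ q), k (∫⁻ η, F₂ η ^ q), two_mul (1 - τ), ENNReal.rpow_add_of_nonneg _ _ hδ hδ]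
    ring

lemma aux_prod_fourier {B h : E → ℂ} (hB : Integrable B) (hh : Integrable h) (ξ : E) :
    ‖𝓕 (fun x => 𝓕⁻ B x * h x) ξ‖ₑ ≤ ∫⁻ η, ‖B η‖ₑ * ‖𝓕 h (ξ - η)‖ₑ := by
  have hsw := integral_integral_swap (μ := (volume : Measure E)) (ν := (volume : Measure E))
    (f := fun x η => Complex.exp (↑(-2 * π * inner ℝ x (ξ - η)) * Complex.I) * (h x * B η)) (by
      have := hh.mul_prod hB
      refine this.mono (AEStronglyMeasurable.mul (Continuous.aestronglyMeasurable (by fun_prop)) this.1) (ae_of_all _ fun z => ?_)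
      simp only [Function.uncurry_def]
      rw [norm_mul, Complex.norm_exp_ofReal_mul_I, one_mul])
  have e1 : 𝓕 (fun x => 𝓕⁻ B x * h x) ξ = ∫ x, ∫ η, Complex.exp (↑(-2 * π * inner ℝ x (ξ - η)) * Complex.I) * (h x * B η) := by
    rw [Real.fourier_eq']
    refine integral_congr_ae (ae_of_all _ fun x => ?_)
    simp only [Real.fourierInv_eq', smul_eq_mul]
    rw [← integral_mul_const, ← integral_const_mul]
    refine integral_congr_ae (ae_of_all _ fun η => ?_)
    simp only []
    have : Complex.exp (↑(-2 * π * inner ℝ x (ξ - η)) * Complex.I) =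
       Complex.exp (↑(-2 * π * inner ℝ x ξ) * Complex.I) * Complex.exp (↑(2 * π * inner ℝ η x) * Complex.I) := by
      rw [← Complex.exp_add, inner_sub_right, real_inner_comm η x]
      congr 1; push_cast; ring
    rw [this]; ring
  rw [e1, hsw]
  refine (enorm_integral_le_lintegral_enorm _).trans (le_of_eq (lintegral_congr fun η => ?_))
  rw [← enorm_mul]
  congr 1
  rw [Real.fourier_eq', ← integral_const_mul]
  refine integral_congr_ae (ae_of_all _ fun x => ?_)
  simp only [smul_eq_mul]; ring

lemma aux_conj_inv (f : SchwartzMap E ℂ) (x : E) :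
    (starRingEnd ℂ) (f x) = 𝓕⁻ (fun η => (starRingEnd ℂ) (𝓕 (⇑f) (-η))) x := by
  have h : f x = 𝓕⁻ (𝓕 (⇑f)) x := by
    rw [← SchwartzMap.fourier_coe, ← SchwartzMap.fourierInv_coe, FourierTransform.fourierInv_fourier_eq]
  rw [h, Real.fourierInv_eq', Real.fourierInv_eq', ← integral_conj, ← integral_neg_eq_self]
  refine integral_congr_ae (ae_of_all _ fun η => ?_)
  simp only [smul_eq_mul, map_mul, ← Complex.exp_conj, Complex.conj_ofReal, Complex.conj_I, inner_neg_left]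
  congr 2
  push_cast; ring

lemma aux_fourier_integrable (f : SchwartzMap E ℂ) : Integrable (𝓕 (⇑f)) := by
  rw [← SchwartzMap.fourier_coe]; exact SchwartzMap.integrable _

lemma aux_u_fourier (f g : SchwartzMap E ℂ) (η : E) :
    ‖𝓕 (fun x => f x * (starRingEnd ℂ) (g x)) η‖ₑ ≤ ∫⁻ ζ, ‖𝓕 (⇑g) ζ‖ₑ * ‖𝓕 (⇑f) (η + ζ)‖ₑ := by
  have e : (fun x => f x * (starRingEnd ℂ) (g x)) = fun x => 𝓕⁻ (fun η => (starRingEnd ℂ) (𝓕 (⇑g) (-η))) x * f x := by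
    funext x; rw [← aux_conj_inv, mul_comm]
  have hB : Integrable (fun η => (starRingEnd ℂ) (𝓕 (⇑g) (-η))) := by
    have := (aux_fourier_integrable g).comp_neg
    exact this.mono (Complex.continuous_conj.comp_aestronglyMeasurable this.1) (ae_of_all _ fun z => by simp)
  rw [e]
  refine (aux_prod_fourier hB f.integrable η).trans (le_of_eq ?_)
  rw [← lintegral_neg_eq_self]
  refine lintegral_congr fun ζ => ?_
  rw [RCLike.enorm_conj, neg_neg, sub_neg_eq_add]

lemma aux_u_integrable (f g : SchwartzMap E ℂ) : Integrable (fun x => f x * (starRingEnd ℂ) (g x)) := by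
  refine Integrable.bdd_mul (c := SchwartzMap.seminorm ℝ 0 0 f) ?_ f.continuous.aestronglyMeasurable
    (ae_of_all _ fun x => SchwartzMap.norm_le_seminorm ℝ f x)
  exact g.integrable.mono (Complex.continuous_conj.comp_aestronglyMeasurable g.integrable.1) (ae_of_all _ fun z => by simp)

lemma aux_u_fourier_integrable (f g : SchwartzMap E ℂ) :
    Integrable (𝓕 (fun x => f x * (starRingEnd ℂ) (g x))) := by
  have hf := aux_fourier_integrable f
  have hg := aux_fourier_integrable g
  have cf : Continuous (𝓕 (⇑f)) := aux_continuous_fourier f.integrable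
  have cg : Continuous (𝓕 (⇑g)) := aux_continuous_fourier g.integrable
  refine ⟨(aux_continuous_fourier (aux_u_integrable f g)).aestronglyMeasurable, ?_⟩
  rw [hasFiniteIntegral_iff_enorm]
  have h := aux_tri (E := E) (F₁ := fun x => ‖𝓕 (⇑f) x‖ₑ) (F₂ := fun x => ‖𝓕 (⇑g) x‖ₑ) (G := fun _ => 1)
    (by fun_prop) (by fun_prop) (by fun_prop) (q := 1) le_rfl (by norm_num)
  refine (lintegral_mono (aux_u_fourier f g)).trans_lt ?_
  simp only [inv_one, sub_self, mul_zero, ENNReal.rpow_zero, one_mul, ENNReal.rpow_one] at h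
  refine h.trans_lt (ENNReal.mul_lt_top ?_ ?_)
  · exact hasFiniteIntegral_iff_enorm.1 hf.2
  · exact hasFiniteIntegral_iff_enorm.1 hg.2

lemma aux_hartree_fourier {K : E → ℂ} (hK : Integrable K) (f g h : SchwartzMap E ℂ) (ξ : E) :
    ‖𝓕 (fun x => (∫ y, K y * (f (x - y) * (starRingEnd ℂ) (g (x - y)))) * h x) ξ‖ₑ ≤
      ∫⁻ η, (‖𝓕 K η‖ₑ * ‖𝓕 (fun x => f x * (starRingEnd ℂ) (g x)) η‖ₑ) * ‖𝓕 (⇑h) (ξ - η)‖ₑ := by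
  set u : E → ℂ := fun x => f x * (starRingEnd ℂ) (g x) with hu
  have hui : Integrable u := aux_u_integrable f g
  have huc : Continuous u := by
    have := f.continuous
    have := g.continuous
    exact f.continuous.mul (Complex.continuous_conj.comp g.continuous)
  have hub : BddAbove (Set.range fun x => ‖u x‖) := by
    refine ⟨SchwartzMap.seminorm ℝ 0 0 f * SchwartzMap.seminorm ℝ 0 0 g, ?_⟩
    rintro _ ⟨x, rfl⟩
    simp only [hu, norm_mul, RCLike.norm_conj]
    have h1 := SchwartzMap.norm_le_seminorm ℝ f x
    have h2 := SchwartzMap.norm_le_seminorm ℝ g x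
    have := norm_nonneg (f x)
    gcongr
  have hF : 𝓕 (convolution K u (ContinuousLinearMap.mul ℂ ℂ) volume) = fun η => 𝓕 K η * 𝓕 u η :=
    funext fun η => Real.fourier_mul_convolution_eq hK hui η
  have hFi : Integrable (fun η => 𝓕 K η * 𝓕 u η) :=
    Integrable.bdd_mul (c := ∫ v, ‖K v‖) (aux_u_fourier_integrable f g) (aux_continuous_fourier hK).aestronglyMeasurable
      (ae_of_all _ fun η => VectorFourier.norm_fourierIntegral_le_integral_norm _ _ _ _ _)
  have hinv := Continuous.fourierInv_fourier_eq
    (hub.continuous_convolution_right_of_integrable (ContinuousLinearMap.mul ℂ ℂ) hK huc)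
    (hK.integrable_convolution (ContinuousLinearMap.mul ℂ ℂ) hui) (by rw [hF]; exact hFi)
  rw [hF] at hinv
  have e : (fun x => (∫ y, K y * (f (x - y) * (starRingEnd ℂ) (g (x - y)))) * h x) =
      fun x => 𝓕⁻ (fun η => 𝓕 K η * 𝓕 u η) x * h x := by
    funext x
    rw [hinv]
    rfl
  rw [e]
  refine (aux_prod_fourier hFi h.integrable ξ).trans (le_of_eq ?_)
  simp_rw [enorm_mul]

end auxFinal

lemma aux_main_const (d : ℕ) (a γ : ℝ) (ha : 0 < a) (hγ : 0 < γ) (q : ℝ) (hq : 1 ≤ q) (hq2 : 1/2 ≤ q⁻¹)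
    {F₁ F₂ : EuclideanSpace ℝ (Fin d) → ℝ≥0∞} (h₁ : Measurable F₁) (h₂ : Measurable F₂) :
    ∫⁻ η, (∫⁻ z, ENNReal.ofReal ((π / auxLam a z) ^ ((d : ℝ) / 2) * Real.exp (-(π ^ 2 * ‖η‖ ^ 2 / auxLam a z))) ∂(auxMu γ))
        * (∫⁻ ζ, F₂ ζ * F₁ (η + ζ)) ≤
      (ENNReal.ofReal (π ^ ((d : ℝ) / 2 * (2 * q⁻¹ - 1))) * ∫⁻ z, ENNReal.ofReal (auxLam a z ^ (-((d : ℝ) / 2 * (2 * q⁻¹ - 1)))) ∂(auxMu γ)) *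
        ((∫⁻ η, F₁ η ^ q) ^ q⁻¹ * (∫⁻ η, F₂ η ^ q) ^ q⁻¹) := by
  have hm := auxLam_measurable a
  have hqi : q⁻¹ ≤ 1 := inv_le_one_of_one_le₀ hq
  have hW : Measurable fun η => ∫⁻ ζ, F₂ ζ * F₁ (η + ζ) :=
    Measurable.lintegral_prod_right' (f := fun z : EuclideanSpace ℝ (Fin d) × EuclideanSpace ℝ (Fin d) => F₂ z.2 * F₁ (z.1 + z.2)) (by fun_prop)
  have e1 : ∀ η : EuclideanSpace ℝ (Fin d), (∫⁻ z, ENNReal.ofReal ((π / auxLam a z) ^ ((d : ℝ) / 2) * Real.exp (-(π ^ 2 * ‖η‖ ^ 2 / auxLam a z))) ∂(auxMu γ))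
        * (∫⁻ ζ, F₂ ζ * F₁ (η + ζ)) = ∫⁻ z, ENNReal.ofReal ((π / auxLam a z) ^ ((d : ℝ) / 2) * Real.exp (-(π ^ 2 * ‖η‖ ^ 2 / auxLam a z)))
        * (∫⁻ ζ, F₂ ζ * F₁ (η + ζ)) ∂(auxMu γ) := fun η => (lintegral_mul_const _ (by fun_prop)).symm
  simp_rw [e1]
  rw [lintegral_lintegral_swap (by unfold Function.uncurry; fun_prop), ← lintegral_const_mul _ (by fun_prop),
    ← lintegral_mul_const _ (by fun_prop)]
  refine lintegral_mono_ae ?_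
  filter_upwards [auxMu_pos a γ ha] with z hz
  have hb : 0 < π ^ 2 / auxLam a z := by positivity
  have h := aux_tri h₁ h₂ (G := fun η : EuclideanSpace ℝ (Fin d) => ENNReal.ofReal (Real.exp (-(π ^ 2 / auxLam a z) * ‖η‖ ^ 2)))
    (by fun_prop) hq hq2
  rw [aux_gauss_lint hb] at h
  calc _ ≤ ∫⁻ η : EuclideanSpace ℝ (Fin d), ENNReal.ofReal ((π / auxLam a z) ^ ((d : ℝ) / 2)) *
      (ENNReal.ofReal (Real.exp (-(π ^ 2 / auxLam a z) * ‖η‖ ^ 2)) ^ (2 * (1 - q⁻¹)) * ∫⁻ ζ, F₂ ζ * F₁ (η + ζ)) := by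
        refine lintegral_mono fun η => ?_
        rw [← mul_assoc]
        refine mul_le_mul_left ?_ _
        rw [ENNReal.ofReal_mul (by positivity)]
        refine mul_le_mul_right ?_ _
        rw [show -(π ^ 2 * ‖η‖ ^ 2 / auxLam a z) = -(π ^ 2 / auxLam a z) * ‖η‖ ^ 2 by ring]
        refine (ENNReal.rpow_one _).symm.le.trans (ENNReal.rpow_le_rpow_of_exponent_ge ?_ (by linarith))
        rw [ENNReal.ofReal_le_one, Real.exp_le_one_iff]
        have : 0 ≤ π ^ 2 / auxLam a z * ‖η‖ ^ 2 := by positivity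
        linarith
    _ ≤ ENNReal.ofReal ((π / auxLam a z) ^ ((d : ℝ) / 2)) * _ :=
        (lintegral_const_mul _ (by fun_prop)).le.trans (mul_le_mul_right h _)
    _ = _ := by
        rw [← mul_assoc]
        congr 1
        rw [ENNReal.ofReal_rpow_of_nonneg (by positivity) (by linarith), ← ENNReal.ofReal_mul (by positivity),
          ← ENNReal.ofReal_mul (by positivity), finrank_euclideanSpace_fin]
        congr 1
        rw [show π / (π ^ 2 / auxLam a z) = (π / auxLam a z)⁻¹ by field_simp, Real.rpow_neg hz.le, ← div_eq_mul_inv,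
          ← Real.div_rpow pi_pos.le hz.le, ← Real.rpow_neg_one (π / auxLam a z), ← Real.rpow_mul (by positivity),
          ← Real.rpow_mul (by positivity), ← Real.rpow_add (by positivity)]
        congr 1; ring

/-- For `2 < p ≤ ∞`, `0 < γ < 2d(1/2 - 1/p)` and `a > 0` (Yukawa-type potential):
`‖H_{a,γ}(f₁,f₂,f₃)‖_{L̂^p} ≤ C ‖f₁‖_{L̂^p} ‖f₂‖_{L̂^p} ‖f₃‖_{L̂^p}` for Schwartz
functions, where `‖f‖_{L̂^p} = ‖𝓕 f‖_{L^{p'}}` with `1/p + 1/p' = 1`. -/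
theorem hartree_fourier_lebesgue_estimate_yukawa (d : ℕ) (hd : 1 ≤ d)
    (p p' : ℝ≥0∞) (hp : 2 < p) (hpp' : 1 / p + 1 / p' = 1)
    (γ : ℝ) (hγ0 : 0 < γ) (hγ : γ < 2 * d * (1 / 2 - 1 / p.toReal))
    (a : ℝ) (ha : 0 < a) :
    ∃ C : ℝ, 0 < C ∧
      ∀ f₁ f₂ f₃ : SchwartzMap (EuclideanSpace ℝ (Fin d)) ℂ,
        eLpNorm (𝓕 (hartreeOp d a γ (⇑f₁) (⇑f₂) (⇑f₃))) p' volume ≤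
          ENNReal.ofReal C * eLpNorm (𝓕 (⇑f₁)) p' volume *
            eLpNorm (𝓕 (⇑f₂)) p' volume * eLpNorm (𝓕 (⇑f₃)) p' volume := by
  have hd0 : (0 : ℝ) < d := by exact_mod_cast hd
  set q : ℝ := p'.toReal with hqdef
  have hP0 : 0 ≤ p.toReal⁻¹ := by positivity
  have hqP : q⁻¹ = 1 - p.toReal⁻¹ := by
    have hs := congrArg ENNReal.toReal hpp'
    have f1 : (1 / p) ≠ ∞ := fun h => by rw [h] at hpp'; simp at hpp'
    have f2 : (1 / p') ≠ ∞ := fun h => by rw [h] at hpp'; simp at hpp'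
    rw [ENNReal.toReal_add f1 f2, one_div, one_div, ENNReal.toReal_inv, ENNReal.toReal_inv, ENNReal.toReal_one] at hs
    linarith
  have hPlt : p.toReal⁻¹ < 1 / 2 := by
    by_contra hcon
    rw [one_div p.toReal] at hγ
    have : 2 * (d : ℝ) * (1 / 2 - p.toReal⁻¹) ≤ 0 := mul_nonpos_of_nonneg_of_nonpos (by positivity) (by linarith)
    linarith
  have hqi2 : 1 / 2 ≤ q⁻¹ := by linarith
  have hq0 : 0 < q := inv_pos.1 (by linarith)
  have hq1 : 1 ≤ q := by
    have : q⁻¹ ≤ 1 := by linarith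
    exact (inv_le_one₀ hq0).1 this
  have hp'0 : p' ≠ 0 := fun h => by rw [hqdef, h] at hq0; simp at hq0
  have hp't : p' ≠ ∞ := fun h => by rw [hqdef, h] at hq0; simp at hq0
  have hκ : γ < 2 * ((d : ℝ) / 2 * (2 * q⁻¹ - 1)) := by
    rw [hqP]; rw [one_div p.toReal] at hγ; linarith
  have hγd : γ < d := by
    rw [one_div p.toReal] at hγ
    have : 0 ≤ (d : ℝ) * p.toReal⁻¹ := by positivity
    linarith
  set D : ℝ≥0∞ := ENNReal.ofReal (π ^ ((d : ℝ) / 2 * (2 * q⁻¹ - 1))) *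
    ∫⁻ z, ENNReal.ofReal (auxLam a z ^ (-((d : ℝ) / 2 * (2 * q⁻¹ - 1)))) ∂(auxMu γ) with hD
  have hDt : D < ∞ := ENNReal.mul_lt_top ENNReal.ofReal_lt_top (aux_const a γ _ ha hγ0 hκ)
  refine ⟨D.toReal + 1, by positivity, fun f₁ f₂ f₃ => ?_⟩
  have hDC : D ≤ ENNReal.ofReal (D.toReal + 1) := by
    rw [ENNReal.le_ofReal_iff_toReal_le hDt.ne (by positivity)]; linarith
  have c1 : Continuous (𝓕 (⇑f₁)) := aux_continuous_fourier f₁.integrable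
  have c2 : Continuous (𝓕 (⇑f₂)) := aux_continuous_fourier f₂.integrable
  have c3 : Continuous (𝓕 (⇑f₃)) := aux_continuous_fourier f₃.integrable
  have hK := (aux_kernel_integrable d hd a γ ha hγ0 hγd).ofReal (𝕜 := ℂ)
  set K : EuclideanSpace ℝ (Fin d) → ℂ := fun y => ((Real.exp (-(a * ‖y‖)) * ‖y‖ ^ (-γ) : ℝ) : ℂ) with hKdef
  have cK : Continuous (𝓕 K) := aux_continuous_fourier hK
  have cu := aux_continuous_fourier (aux_u_integrable f₁ f₂)
  set A : EuclideanSpace ℝ (Fin d) → ℝ≥0∞ :=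
    fun η => ‖𝓕 K η‖ₑ * ‖𝓕 (fun x => f₁ x * (starRingEnd ℂ) (f₂ x)) η‖ₑ with hA
  have hAint : ∫⁻ η, A η ≤ D * ((∫⁻ η, ‖𝓕 (⇑f₁) η‖ₑ ^ q) ^ q⁻¹ * (∫⁻ η, ‖𝓕 (⇑f₂) η‖ₑ ^ q) ^ q⁻¹) := by
    refine le_trans (lintegral_mono fun η => ?_) (aux_main_const d a γ ha hγ0 q hq1 hqi2
      (F₁ := fun x => ‖𝓕 (⇑f₁) x‖ₑ) (F₂ := fun x => ‖𝓕 (⇑f₂) x‖ₑ) (by fun_prop) (by fun_prop))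
    exact mul_le_mul' (aux_kernel_fourier d hd a γ ha hγ0 hγd η) (aux_u_fourier f₁ f₂ η)
  simp only [eLpNorm_eq_lintegral_rpow_enorm_toReal hp'0 hp't, ← hqdef, one_div]
  calc (∫⁻ ξ, ‖𝓕 (hartreeOp d a γ (⇑f₁) (⇑f₂) (⇑f₃)) ξ‖ₑ ^ q) ^ q⁻¹
      ≤ (∫⁻ ξ, (∫⁻ η, A η * ‖𝓕 (⇑f₃) (ξ - η)‖ₑ) ^ q) ^ q⁻¹ := by
        refine ENNReal.rpow_le_rpow (lintegral_mono fun ξ => ENNReal.rpow_le_rpow ?_ hq0.le) (by positivity)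
        exact aux_hartree_fourier hK f₁ f₂ f₃ ξ
    _ ≤ ((∫⁻ η, A η) ^ q * ∫⁻ η, ‖𝓕 (⇑f₃) η‖ₑ ^ q) ^ q⁻¹ :=
        ENNReal.rpow_le_rpow (aux_young (A := A) (B := fun x => ‖𝓕 (⇑f₃) x‖ₑ) (by fun_prop) (by fun_prop) hq1) (by positivity)
    _ = (∫⁻ η, A η) * (∫⁻ η, ‖𝓕 (⇑f₃) η‖ₑ ^ q) ^ q⁻¹ := by
        rw [ENNReal.mul_rpow_of_nonneg _ _ (by positivity), ENNReal.rpow_rpow_inv hq0.ne']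
    _ ≤ _ := by
        refine mul_le_mul_left (hAint.trans ?_) _
        rw [← mul_assoc]
        exact mul_le_mul_left (mul_le_mul_left hDC _) _
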